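/- Let Â = A + εB be a symmetric n×n dual matrix (A^T = A and B^T = B) whose dual index is one. If Ĥ is a dual group generalized inverse of Â, X̂ is a dual Moore–Penrose generalized inverse of Â, and Ĝ is a dual core generalized inverse of Â, then Ĥ = X̂ = Ĝ. -/

import Mathlib

open Matrix

/-- The dual matrix `A + εB`, viewed as a matrix over the dual numbers `ℝ[ε]`. -/
def dm {n : ℕ} (A B : Matrix (Fin n) (Fin n) ℝ) :
    Matrix (Fin n) (Fin n) (DualNumber ℝ) :=
  fun i j => TrivSqZeroExt.inl (A i j) + TrivSqZeroExt.inr (B i j)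

/-- A dual matrix has dual index one iff its column space equals that of its square,
equivalently (as shown in the paper) there is a dual matrix `X` with `M² * X = M`. -/
def DualIndexOne {n : ℕ} (M : Matrix (Fin n) (Fin n) (DualNumber ℝ)) : Prop :=
  ∃ X : Matrix (Fin n) (Fin n) (DualNumber ℝ), M * M * X = M

/-- `G` is a group inverse of the real matrix `A`. -/
def IsGroupInv {n : ℕ} (A G : Matrix (Fin n) (Fin n) ℝ) : Prop :=
  A * G * A = A ∧ G * A * G = G ∧ A * G = G * A

/-- `X` is the Moore–Penrose inverse of the real matrix `A`. -/
def IsMoorePenrose {n : ℕ} (A X : Matrix (Fin n) (Fin n) ℝ) : Prop :=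
  A * X * A = A ∧ X * A * X = X ∧ (A * X)ᵀ = A * X ∧ (X * A)ᵀ = X * A

/-- `C` is a core inverse of the real matrix `A`. -/
def IsCoreInv {n : ℕ} (A C : Matrix (Fin n) (Fin n) ℝ) : Prop :=
  A * C * A = A ∧ A * (C * C) = C ∧ (A * C)ᵀ = A * C

/-- `G` is a dual group generalized inverse (DGGI) of the dual matrix `M`. -/
def IsDGGI {n : ℕ} (M G : Matrix (Fin n) (Fin n) (DualNumber ℝ)) : Prop :=
  M * G * M = M ∧ G * M * G = G ∧ M * G = G * M

/-- `X` is a dual Moore–Penrose generalized inverse (DMPGI) of the dual matrix `M`. -/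
def IsDMPGI {n : ℕ} (M X : Matrix (Fin n) (Fin n) (DualNumber ℝ)) : Prop :=
  M * X * M = M ∧ X * M * X = X ∧ (M * X)ᵀ = M * X ∧ (X * M)ᵀ = X * M

/-- `G` is a dual core generalized inverse (DCGI) of the dual matrix `M`. -/
def IsDCGI {n : ℕ} (M G : Matrix (Fin n) (Fin n) (DualNumber ℝ)) : Prop :=
  M * G * M = M ∧ M * (G * G) = G ∧ (M * G)ᵀ = M * G

/-!
In a semigroup with involution, the star of a group inverse of `a` is a group inverse of `star a`.
So if `a` is self-adjoint, uniqueness makes its group inverse `h` self-adjoint too, and then `a * h`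
is self-adjoint because `a` and `h` commute. Hence `h` satisfies the Moore–Penrose and the core
equations. The former always have at most one solution, the latter because `h * (a * a) = a`.
-/

section Semigroup

variable {S : Type*} [Semigroup S] {a x y : S}

/-- `x` is a group inverse of `a` in a semigroup: an inverse of `a` that commutes with it. It
specializes to `IsDGGI` for dual matrices. -/
structure IsGroupInverse (a x : S) : Prop where
  mul_mul_left : a * x * a = a
  mul_mul_right : x * a * x = x
  commute : Commute a x

namespace IsGroupInverse

theorem mul_mul_self (h : IsGroupInverse a x) : x * (a * a) = a := by
  rw [← mul_assoc, ← h.commute.eq, h.mul_mul_left]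

theorem mul_inverse_mul_inverse (h : IsGroupInverse a x) : a * (x * x) = x := by
  rw [← mul_assoc, h.commute.eq, h.mul_mul_right]

theorem mul_eq_mul (hx : IsGroupInverse a x) (hy : IsGroupInverse a y) : a * x = a * y :=
  calc a * x = y * (a * a) * x := by rw [hy.mul_mul_self]
    _ = y * (a * (a * x)) := by simp only [mul_assoc]
    _ = y * (a * x * a) := by rw [mul_assoc, hx.commute.eq]
    _ = a * y := by rw [hx.mul_mul_left, hy.commute.eq]

protected theorem unique (hx : IsGroupInverse a x) (hy : IsGroupInverse a y) : x = y :=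
  calc x = a * x * x := by rw [mul_assoc, hx.mul_inverse_mul_inverse]
    _ = y * a * x := by rw [hx.mul_eq_mul hy, hy.commute.eq]
    _ = y * a * y := by rw [mul_assoc, hx.mul_eq_mul hy, mul_assoc]
    _ = y := hy.mul_mul_right

end IsGroupInverse

end Semigroup

section StarSemigroup

variable {S : Type*} [Semigroup S] [StarMul S] {a b x y : S}

/-- `x` is a Moore–Penrose inverse of `a` in a semigroup with involution. It specializes to
`IsDMPGI` for dual matrices with the transpose as involution. -/
structure IsMoorePenroseInverse (a x : S) : Prop where
  mul_mul_left : a * x * a = a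
  mul_mul_right : x * a * x = x
  isSelfAdjoint_mul : IsSelfAdjoint (a * x)
  isSelfAdjoint_mul_swap : IsSelfAdjoint (x * a)

/-- `x` is a core inverse of `a` in a semigroup with involution. It specializes to `IsDCGI` for dual
matrices with the transpose as involution. These equations alone need not determine `x`: in a
monoid, every right inverse of `a` satisfies them. -/
structure IsCoreInverse (a x : S) : Prop where
  mul_mul_left : a * x * a = a
  mul_inverse_mul_inverse : a * (x * x) = x
  isSelfAdjoint_mul : IsSelfAdjoint (a * x)

theorem mul_eq_mul_of_isSelfAdjoint (hx : a * x * a = a) (hy : a * y * a = a)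
    (hax : IsSelfAdjoint (a * x)) (hay : IsSelfAdjoint (a * y)) : a * x = a * y := by
  have absorb_x : a * y * (a * x) = a * x := by rw [← mul_assoc, hy]
  have absorb_y : a * x * (a * y) = a * y := by rw [← mul_assoc, hx]
  have comm : Commute (a * y) (a * x) := (hay.commute_iff hax).2 (absorb_x.symm ▸ hax)
  rw [← absorb_x, comm.eq, absorb_y]

theorem mul_eq_mul_of_isSelfAdjoint_swap (hx : a * x * a = a) (hy : a * y * a = a)
    (hxa : IsSelfAdjoint (x * a)) (hya : IsSelfAdjoint (y * a)) : x * a = y * a := by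
  have absorb_x : x * a * (y * a) = x * a := by rw [mul_assoc, ← mul_assoc a, hy]
  have absorb_y : y * a * (x * a) = y * a := by rw [mul_assoc, ← mul_assoc a, hx]
  have comm : Commute (x * a) (y * a) := (hxa.commute_iff hya).2 (absorb_x.symm ▸ hxa)
  rw [← absorb_x, comm.eq, absorb_y]

theorem IsMoorePenroseInverse.unique (hx : IsMoorePenroseInverse a x)
    (hy : IsMoorePenroseInverse a y) : x = y := by
  have mul_eq : a * x = a * y := mul_eq_mul_of_isSelfAdjoint hx.mul_mul_left hy.mul_mul_left
    hx.isSelfAdjoint_mul hy.isSelfAdjoint_mul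
  have swap_eq : x * a = y * a := mul_eq_mul_of_isSelfAdjoint_swap hx.mul_mul_left hy.mul_mul_left
    hx.isSelfAdjoint_mul_swap hy.isSelfAdjoint_mul_swap
  rw [← hx.mul_mul_right, swap_eq, mul_assoc, mul_eq, ← mul_assoc, hy.mul_mul_right]

theorem IsCoreInverse.eq_mul_mul (h : IsCoreInverse a x) (hb : b * (a * a) = a) :
    b * (a * x) = x :=
  calc b * (a * x) = b * (a * (a * (x * x))) := by rw [h.mul_inverse_mul_inverse]
    _ = b * (a * a) * (x * x) := by simp only [mul_assoc]
    _ = x := by rw [hb, h.mul_inverse_mul_inverse]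

theorem IsCoreInverse.unique (hx : IsCoreInverse a x) (hy : IsCoreInverse a y)
    (hb : b * (a * a) = a) : x = y := by
  have mul_eq : a * x = a * y := mul_eq_mul_of_isSelfAdjoint hx.mul_mul_left hy.mul_mul_left
    hx.isSelfAdjoint_mul hy.isSelfAdjoint_mul
  rw [← hx.eq_mul_mul hb, mul_eq, hy.eq_mul_mul hb]

namespace IsGroupInverse

protected theorem star (h : IsGroupInverse a x) : IsGroupInverse (star a) (star x) where
  mul_mul_left := by rw [← star_mul, ← star_mul, ← mul_assoc, h.mul_mul_left]
  mul_mul_right := by rw [← star_mul, ← star_mul, ← mul_assoc, h.mul_mul_right]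
  commute := commute_star_star.2 h.commute

theorem isSelfAdjoint (h : IsGroupInverse a x) (ha : IsSelfAdjoint a) : IsSelfAdjoint x :=
  IsGroupInverse.unique (ha.star_eq ▸ h.star) h

theorem isSelfAdjoint_mul (h : IsGroupInverse a x) (ha : IsSelfAdjoint a) :
    IsSelfAdjoint (a * x) :=
  (ha.commute_iff (h.isSelfAdjoint ha)).1 h.commute

theorem isMoorePenroseInverse (h : IsGroupInverse a x) (ha : IsSelfAdjoint a) :
    IsMoorePenroseInverse a x where
  mul_mul_left := h.mul_mul_left
  mul_mul_right := h.mul_mul_right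
  isSelfAdjoint_mul := h.isSelfAdjoint_mul ha
  isSelfAdjoint_mul_swap := h.commute.eq ▸ h.isSelfAdjoint_mul ha

theorem isCoreInverse (h : IsGroupInverse a x) (ha : IsSelfAdjoint a) : IsCoreInverse a x where
  mul_mul_left := h.mul_mul_left
  mul_inverse_mul_inverse := h.mul_inverse_mul_inverse
  isSelfAdjoint_mul := h.isSelfAdjoint_mul ha

end IsGroupInverse

theorem stmt19_general {h g : S} (ha : IsSelfAdjoint a) (hh : IsGroupInverse a h)
    (hx : IsMoorePenroseInverse a x) (hg : IsCoreInverse a g) : h = x ∧ x = g := by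
  have h_eq_x : h = x := (hh.isMoorePenroseInverse ha).unique hx
  have h_eq_g : h = g := (hh.isCoreInverse ha).unique hg hh.mul_mul_self
  exact ⟨h_eq_x, h_eq_x.symm.trans h_eq_g⟩

end StarSemigroup

section DualMatrix

/-- The trivial involution on the dual numbers, for which the star of a dual matrix is its
transpose. -/
instance : StarRing (DualNumber ℝ) := starRingOfComm

instance : TrivialStar (DualNumber ℝ) := ⟨fun _ ↦ rfl⟩

theorem isSelfAdjoint_iff_transpose_eq {m R : Type*} [Star R] [TrivialStar R]
    {M : Matrix m m R} : IsSelfAdjoint M ↔ Mᵀ = M := by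
  rw [isSelfAdjoint_iff, star_eq_conjTranspose, conjTranspose_eq_transpose_of_trivial]

variable {n : ℕ} {M X : Matrix (Fin n) (Fin n) (DualNumber ℝ)}

theorem transpose_dm (A B : Matrix (Fin n) (Fin n) ℝ) : (dm A B)ᵀ = dm Aᵀ Bᵀ := rfl

theorem isSelfAdjoint_dm {A B : Matrix (Fin n) (Fin n) ℝ} (hA : Aᵀ = A) (hB : Bᵀ = B) :
    IsSelfAdjoint (dm A B) := by
  rw [isSelfAdjoint_iff_transpose_eq, transpose_dm, hA, hB]

theorem IsDGGI.isGroupInverse : IsDGGI M X → IsGroupInverse M X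
  | ⟨mul_mul_left, mul_mul_right, commute⟩ => ⟨mul_mul_left, mul_mul_right, commute⟩

theorem IsDMPGI.isMoorePenroseInverse : IsDMPGI M X → IsMoorePenroseInverse M X
  | ⟨mul_mul_left, mul_mul_right, symm, symm_swap⟩ => ⟨mul_mul_left, mul_mul_right,
      isSelfAdjoint_iff_transpose_eq.2 symm, isSelfAdjoint_iff_transpose_eq.2 symm_swap⟩

theorem IsDCGI.isCoreInverse : IsDCGI M X → IsCoreInverse M X
  | ⟨mul_mul_left, mul_inverse_mul_inverse, symm⟩ =>
      ⟨mul_mul_left, mul_inverse_mul_inverse, isSelfAdjoint_iff_transpose_eq.2 symm⟩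

end DualMatrix

theorem stmt19 {n : ℕ} (A B : Matrix (Fin n) (Fin n) ℝ)
    (hA : Aᵀ = A) (hB : Bᵀ = B)
    (hidx : DualIndexOne (dm A B))
    (H X G : Matrix (Fin n) (Fin n) (DualNumber ℝ))
    (hH : IsDGGI (dm A B) H) (hX : IsDMPGI (dm A B) X) (hG : IsDCGI (dm A B) G) :
    H = X ∧ X = G :=
  stmt19_general (isSelfAdjoint_dm hA hB) hH.isGroupInverse hX.isMoorePenroseInverse
    hG.isCoreInverse
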